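/- If n ≥ 3 is an odd integer, then for any integer U ≥ 2 the ideal class group of the imaginary quadratic field ℚ(√(1 − 4U^n)) contains an element of order n; in particular, n divides the class number of ℚ(√(1 − 4U^n)). -/

import Mathlib

/-- The quadratic field `ℚ(√d)`, realized as the subfield of `ℂ` generated over `ℚ`
by a complex square root of `d`. -/
noncomputable def Qsqrt (d : ℤ) : IntermediateField ℚ ℂ :=
  IntermediateField.adjoin ℚ {((d : ℂ) ^ ((1 : ℂ) / 2))}

/-- The class number of `ℚ(√d)`: the order of the ideal class group of its ring of
integers. -/
noncomputable def classNumSqrt (d : ℤ) : ℕ :=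
  Nat.card (ClassGroup (NumberField.RingOfIntegers (Qsqrt d)))

/-! Put `α = (1 + √(1 - 4Uⁿ)) / 2`, so that `α (1 - α) = Uⁿ`. The factors are coprime, hence
`(α) = Iⁿ` for some ideal `I`, and the class of `I` has order `n` unless `α` is associated to
`βᵖ` for some prime `p ∣ n`. Write `V = U ^ (n / p)`.

The unit is absorbed into `β`: the field is imaginary quadratic, so its unit group is finite, and
it has an element of odd prime order `p` only if `p = 3` and `√-3` lies in the field. Then
`4V³ - 1 = 3k²` is solvable, which for `k = 2t + 1` reads `t³ + V³ = (t + 1)³` and contradicts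
Fermat's last theorem for exponent `3`.

So `α = γᵖ`, where `γ` has norm `V` and some trace `t`. Taking traces gives `Dₚ(t, V) = 1` with
`Dₚ` the Dickson polynomial. As `p` is odd, `t ∣ Dₚ(t, V)`, so `t = ±1` and `Dₚ(1, V) = ±1`,
which is excluded by expanding `Dₚ(1, V)` modulo `V³`.
-/

open Polynomial NumberField
open Algebra (IsQuadraticExtension)
open scoped nonZeroDivisors

section Dickson

variable {R : Type*} [CommRing R]

lemma X_dvd_dickson_of_odd (k : ℕ) (a : R) {n : ℕ} (hn : Odd n) : X ∣ dickson k a n := by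
  obtain ⟨m, rfl⟩ := hn
  induction m with
  | zero => simp
  | succ m ih =>
    rw [show 2 * (m + 1) + 1 = 2 * m + 1 + 2 by ring, dickson_add_two]
    exact dvd_sub (dvd_mul_right _ _) (ih.mul_left _)

lemma eval_neg_dickson (k : ℕ) (a x : R) (n : ℕ) :
    (dickson k a n).eval (-x) = (-1) ^ n * (dickson k a n).eval x := by
  induction n using Nat.twoStepInduction with
  | zero => simp
  | one => simp
  | more n ih₀ ih₁ =>
    simp only [dickson_add_two, eval_sub, eval_mul, eval_X, eval_C, ih₀, ih₁]
    ring

lemma pow_three_dvd_eval_one_dickson_sub (a : R) (j : ℕ) :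
    a ^ 3 ∣ (dickson 1 a (2 * j + 3)).eval 1 -
      (1 - (2 * j + 3) * a + (2 * j + 3) * j * a ^ 2) := by
  have hrec (n : ℕ) : (dickson 1 a (n + 2)).eval 1 =
      (dickson 1 a (n + 1)).eval 1 - a * (dickson 1 a n).eval 1 := by
    simp [dickson_add_two]
  have hrec₂ (n : ℕ) : (dickson 1 a (n + 4)).eval 1 =
      (1 - 2 * a) * (dickson 1 a (n + 2)).eval 1 - a ^ 2 * (dickson 1 a n).eval 1 := by
    linear_combination hrec (n + 2) + hrec (n + 1) + a * hrec n
  have h₁ : (dickson 1 a 1).eval 1 = 1 := by simp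
  have h₃ : (dickson 1 a 3).eval 1 = 1 - 3 * a := by
    rw [hrec 1, hrec 0, dickson_zero, dickson_one]
    norm_num
    ring
  induction j using Nat.twoStepInduction with
  | zero => exact ⟨0, by rw [mul_zero, zero_add, h₃]; push_cast; ring⟩
  | one => exact ⟨0, by rw [show 2 * 1 + 3 = 1 + 4 from rfl, hrec₂, h₁, h₃]; push_cast; ring⟩
  | more j ih₀ ih₁ =>
    obtain ⟨c, hc⟩ := ih₀
    obtain ⟨d, hd⟩ := ih₁
    refine ⟨(1 - 2 * a) * d - a ^ 2 * c - (2 * j + 3) * j * a - 4 * j ^ 2 - 12 * j - 7, ?_⟩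
    rw [show 2 * (j + 2) + 3 = 2 * j + 3 + 4 by ring, hrec₂]
    rw [show 2 * (j + 1) + 3 = 2 * j + 3 + 2 by ring] at hd
    push_cast at hd ⊢
    linear_combination (1 - 2 * a) * hd - a ^ 2 * hc

lemma sq_dvd_of_eval_one_dickson_eq_one [IsDomain R] {a : R} (ha : a ≠ 0) {n : ℕ}
    (hn : Odd n) (hn₁ : n ≠ 1) (h : (dickson 1 a n).eval 1 = 1) : a ^ 2 ∣ (n : R) := by
  obtain ⟨j, rfl⟩ : ∃ j, n = 2 * j + 3 := by
    obtain ⟨m, rfl⟩ := hn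
    exact ⟨m - 1, by omega⟩
  obtain ⟨c, hc⟩ := pow_three_dvd_eval_one_dickson_sub a j
  have hdvd : a ^ 2 ∣ ((2 * j + 3 : ℕ) : R) * (1 - j * a) := by
    refine ⟨c, mul_left_cancel₀ ha ?_⟩
    rw [h] at hc
    push_cast
    linear_combination hc
  have hcop : IsCoprime (a ^ 2) (1 - j * a) := IsCoprime.pow_left ⟨j, 1, by ring⟩
  exact hcop.dvd_of_dvd_mul_right hdvd

lemma eval_one_dickson_ne_neg_one {a : ℤ} (ha : 2 ≤ a) {n : ℕ} (hn : Odd n) :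
    (dickson 1 a n).eval 1 ≠ -1 := by
  intro h
  obtain rfl | hn₁ := eq_or_ne n 1
  · simp at h
  obtain ⟨j, rfl⟩ : ∃ j, n = 2 * j + 3 := by
    obtain ⟨m, rfl⟩ := hn
    exact ⟨m - 1, by omega⟩
  obtain ⟨c, hc⟩ := pow_three_dvd_eval_one_dickson_sub a j
  rw [h] at hc
  have ha_dvd : a ∣ 2 := ⟨2 * j + 3 - (2 * j + 3) * j * a - a ^ 2 * c, by linear_combination -hc⟩
  obtain rfl : a = 2 := le_antisymm (Int.le_of_dvd two_pos ha_dvd) ha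
  have hparity : 2 * (j ^ 2 + j + c : ℤ) = 1 := by linarith
  omega

lemma eval_dickson_ne_one {a : ℤ} (ha : 2 ≤ a) {n : ℕ} (hn : Odd n) (hn₁ : n ≠ 1)
    (han : ¬ a ^ 2 ∣ n) (x : ℤ) : (dickson 1 a n).eval x ≠ 1 := by
  intro h
  have hx : x ∣ 1 := by
    simpa [h] using eval_dvd (x := x) (X_dvd_dickson_of_odd 1 a hn)
  obtain rfl | rfl := Int.isUnit_iff.mp (isUnit_of_dvd_one hx)
  · exact han (sq_dvd_of_eval_one_dickson_eq_one (by omega) hn hn₁ h)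
  · rw [eval_neg_dickson, hn.neg_one_pow] at h
    exact eval_one_dickson_ne_neg_one ha hn (by linarith)

end Dickson

section TraceNorm

variable {R S : Type*} [CommRing R] [CommRing S] [Algebra R S]

section Nontrivial

variable [Nontrivial R] [IsQuadraticExtension R S]

lemma sq_eq_trace_smul_sub_norm (x : S) :
    x ^ 2 = Algebra.trace R S x • x - algebraMap R S (Algebra.norm R x) := by
  let b := Module.finBasisOfFinrankEq R S (IsQuadraticExtension.finrank_eq_two R S)
  have cayley_hamilton := Matrix.aeval_self_charpoly (Algebra.leftMulMatrix b x)
  rw [Matrix.charpoly_fin_two, ← Algebra.trace_eq_matrix_trace, ← Algebra.norm_eq_matrix_det,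
    aeval_algHom_apply] at cayley_hamilton
  have hx := (map_eq_zero_iff _ (Algebra.leftMulMatrix_injective b)).mp cayley_hamilton
  simp only [map_add, map_sub, map_mul, map_pow, aeval_X, aeval_C] at hx
  rw [Algebra.smul_def]
  linear_combination hx

lemma trace_algebraMap_eq_two_mul (r : R) : Algebra.trace R S (algebraMap R S r) = 2 * r := by
  rw [Algebra.trace_algebraMap, IsQuadraticExtension.finrank_eq_two, nsmul_eq_mul, Nat.cast_ofNat]

lemma norm_algebraMap_eq_sq (r : R) : Algebra.norm R (algebraMap R S r) = r ^ 2 := by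
  rw [Algebra.norm_algebraMap, IsQuadraticExtension.finrank_eq_two]

lemma trace_pow_eq_eval_dickson (x : S) (n : ℕ) :
    Algebra.trace R S (x ^ n) =
      (dickson 1 (Algebra.norm R x) n).eval (Algebra.trace R S x) := by
  induction n using Nat.twoStepInduction with
  | zero =>
    have htrace_one := trace_algebraMap_eq_two_mul (S := S) (1 : R)
    rw [map_one] at htrace_one
    rw [pow_zero, htrace_one, dickson_zero]
    norm_num
  | one => simp
  | more n ih₀ ih₁ =>
    have hx : x ^ (n + 2) = Algebra.trace R S x • x ^ (n + 1) - Algebra.norm R x • x ^ n := by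
      rw [pow_add, sq_eq_trace_smul_sub_norm (R := R)]
      simp only [Algebra.smul_def]
      ring
    simp only [hx, map_sub, map_smul, ih₀, ih₁, dickson_add_two, eval_sub, eval_mul, eval_X,
      eval_C, smul_eq_mul]

-- Both sides come from computing the trace of `(x * y) ^ 2 = x ^ 2 * y ^ 2` in two ways.
lemma sq_two_mul_trace_mul_sub (x y : S) :
    (2 * Algebra.trace R S (x * y) - Algebra.trace R S x * Algebra.trace R S y) ^ 2 =
      (Algebra.trace R S x ^ 2 - 4 * Algebra.norm R x) *
        (Algebra.trace R S y ^ 2 - 4 * Algebra.norm R y) := by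
  set s := Algebra.trace R S x
  set t := Algebra.trace R S y
  set M := Algebra.norm R x
  set N := Algebra.norm R y
  have hexpand : (x * y) ^ 2 = (s * t) • (x * y) - (s * N) • x - (t * M) • y +
      algebraMap R S (M * N) := by
    rw [mul_pow, sq_eq_trace_smul_sub_norm (R := R) x, sq_eq_trace_smul_sub_norm (R := R) y]
    simp only [Algebra.smul_def, map_mul]
    ring
  have htrace := congrArg (Algebra.trace R S) hexpand
  rw [sq_eq_trace_smul_sub_norm (R := R), map_mul (Algebra.norm R)] at htrace
  simp only [map_sub, map_add, map_smul, trace_algebraMap_eq_two_mul, smul_eq_mul] at htrace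
  linear_combination 4 * htrace

end Nontrivial

lemma trace_eq_and_norm_eq_of_sq_eq [IsDomain R] [IsQuadraticExtension R S] {x : S} {a b : R}
    (hab : ¬ IsSquare (a ^ 2 - 4 * b)) (hx : x ^ 2 = a • x - algebraMap R S b) :
    Algebra.trace R S x = a ∧ Algebra.norm R x = b := by
  set t := Algebra.trace R S x
  set N := Algebra.norm R x
  have hlin : (t - a) • x = algebraMap R S (N - b) := by
    rw [sub_smul, map_sub]
    linear_combination hx - sq_eq_trace_smul_sub_norm (R := R) x
  have htrace : (t - a) * t = 2 * (N - b) := by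
    rw [← trace_algebraMap_eq_two_mul (S := S), ← hlin, map_smul, smul_eq_mul]
  have hnorm : (t - a) ^ 2 * N = (N - b) ^ 2 := by
    rw [← norm_algebraMap_eq_sq (S := S) (N - b), ← hlin, Algebra.smul_def, map_mul,
      norm_algebraMap_eq_sq]
  have ht : t = a := by
    by_contra hne
    have hdisc : t ^ 2 = 4 * N := by
      apply mul_left_cancel₀ (pow_ne_zero 2 (sub_ne_zero.mpr hne))
      linear_combination ((t - a) * t + 2 * (N - b)) * htrace - 4 * hnorm
    exact hab ⟨t - a, by linear_combination hdisc - 2 * htrace⟩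
  have htwo : (2 : R) ≠ 0 := fun h => hab ⟨a, by linear_combination -2 * b * h⟩
  rw [ht, sub_self, zero_mul, eq_comm, mul_eq_zero] at htrace
  exact ⟨ht, sub_eq_zero.mp (htrace.resolve_left htwo)⟩

end TraceNorm

lemma eq_one_of_three_mul_sq_eq {x k : ℤ} (h : 3 * k ^ 2 = 4 * x ^ 3 - 1) : x = 1 := by
  obtain ⟨t, rfl⟩ : Odd k := by
    by_contra hk
    obtain ⟨t, rfl⟩ := Int.not_odd_iff_even.mp hk
    ring_nf at h
    omega
  have hcubes : t ^ 3 + x ^ 3 = (t + 1) ^ 3 := by linarith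
  have hx : x ≠ 0 := by
    rintro rfl
    nlinarith [sq_nonneg (2 * t + 1)]
  have ht : t = 0 ∨ t + 1 = 0 := by
    by_contra! ht
    exact fermatLastTheoremFor_iff_int.mp fermatLastTheoremThree t x (t + 1) ht.1 hx ht.2 hcubes
  have hx_cube : x ^ 3 = 1 ^ 3 := by
    obtain rfl | ht := ht
    · linarith
    · obtain rfl : t = -1 := by omega
      linarith
  exact (Odd.strictMono_pow (by decide : Odd 3)).injective hx_cube

section QuadraticOrder

variable {S : Type*} [CommRing S] [IsQuadraticExtension ℤ S]

lemma trace_eq_one_and_norm_eq_of_sq_eq_sub {α : S} {c : ℤ} (hc : 0 < c) (hα : α ^ 2 = α - c) :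
    Algebra.trace ℤ S α = 1 ∧ Algebra.norm ℤ α = c :=
  trace_eq_and_norm_eq_of_sq_eq (fun hsq => by linarith [hsq.nonneg]) (by simpa using hα)

lemma pow_ne_of_sq_eq_sub_pow {α : S} {V : ℤ} {p : ℕ} (hV : 2 ≤ V) (hp : p.Prime) (hodd : Odd p)
    (hα : α ^ 2 = α - (V ^ p : ℤ)) (γ : S) : γ ^ p ≠ α := by
  rintro rfl
  obtain ⟨htrace, hnorm⟩ := trace_eq_one_and_norm_eq_of_sq_eq_sub (by positivity) hα
  rw [map_pow] at hnorm
  have hnorm_γ : Algebra.norm ℤ γ = V := hodd.strictMono_pow.injective hnorm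
  have hsq : ¬ V ^ 2 ∣ p := fun hdvd => by
    have hunit := (Nat.prime_iff_prime_int.mp hp).squarefree V (by rwa [← sq])
    rw [Int.isUnit_iff] at hunit
    omega
  rw [trace_pow_eq_eval_dickson, hnorm_γ] at htrace
  exact eval_dickson_ne_one hV hodd hp.ne_one hsq _ htrace

lemma eq_one_of_sq_eq_sub_pow_three {α ω : S} {V : ℤ} (hV : 0 < V)
    (hα : α ^ 2 = α - (V ^ 3 : ℤ)) (hω : ω ^ 2 + ω + 1 = 0) : V = 1 := by
  obtain ⟨htrace_α, hnorm_α⟩ := trace_eq_one_and_norm_eq_of_sq_eq_sub (by positivity) hα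
  obtain ⟨htrace_ω, hnorm_ω⟩ : Algebra.trace ℤ S ω = -1 ∧ Algebra.norm ℤ ω = 1 :=
    trace_eq_and_norm_eq_of_sq_eq (fun hsq => by linarith [hsq.nonneg]) <| by
      rw [neg_one_smul, map_one]
      linear_combination hω
  have hdisc := sq_two_mul_trace_mul_sub (R := ℤ) α ω
  rw [htrace_α, hnorm_α, htrace_ω, hnorm_ω] at hdisc
  obtain ⟨k, hk⟩ : 3 ∣ 2 * Algebra.trace ℤ S (α * ω) - 1 * -1 :=
    Int.prime_three.dvd_of_dvd_pow ⟨4 * V ^ 3 - 1, by rw [hdisc]; ring⟩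
  rw [hk] at hdisc
  exact eq_one_of_three_mul_sq_eq (k := k) (by linarith)

end QuadraticOrder

section DedekindDomain

variable {R : Type*} [CommRing R] [IsDedekindDomain R]

lemma exists_span_singleton_eq_pow {a b c : R} {n : ℕ} (hab : IsCoprime a b)
    (h : a * b = c ^ n) : ∃ I : Ideal R, Ideal.span {a} = I ^ n := by
  refine exists_eq_pow_of_mul_eq_pow_of_coprime (b := Ideal.span {b}) (c := Ideal.span {c}) ?_ ?_
  · rwa [Ideal.isCoprime_span_singleton_iff]
  · rw [Ideal.span_singleton_mul_span_singleton, Ideal.span_singleton_pow, h]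

lemma exists_classGroup_orderOf_eq {α : R} (hα : α ≠ 0) {n : ℕ} (hn : n ≠ 0) {I : Ideal R}
    (hI : Ideal.span {α} = I ^ n)
    (h : ∀ p : ℕ, p.Prime → p ∣ n → ∀ β, ¬ Associated (β ^ p) α) :
    ∃ x : ClassGroup R, orderOf x = n := by
  have hI₀ : I ≠ 0 := by
    rintro rfl
    rw [zero_pow hn] at hI
    exact hα (Ideal.span_singleton_eq_bot.mp hI)
  let J : (Ideal R)⁰ := ⟨I, mem_nonZeroDivisors_of_ne_zero hI₀⟩
  have mk0_pow_eq_one_iff (k : ℕ) : ClassGroup.mk0 J ^ k = 1 ↔ (I ^ k).IsPrincipal := by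
    rw [← map_pow]
    exact ClassGroup.mk0_eq_one_iff (J ^ k).2
  refine ⟨ClassGroup.mk0 J, orderOf_eq_of_pow_and_pow_div_prime hn.bot_lt ?_ fun p hp hpn hJ => ?_⟩
  · rw [mk0_pow_eq_one_iff, ← hI]
    exact ⟨α, rfl⟩
  · obtain ⟨β, hβ⟩ := (mk0_pow_eq_one_iff _).mp hJ
    refine h p hp hpn β (Ideal.span_singleton_eq_span_singleton.mp ?_)
    rw [hI, ← Ideal.span_singleton_pow, ← Ideal.submodule_span_eq, ← hβ, ← pow_mul,
      Nat.div_mul_cancel hpn]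

end DedekindDomain

lemma pow_surjective_of_forall_orderOf_ne {G : Type*} [Group G] [Finite G] {p : ℕ} (hp : p.Prime)
    (h : ∀ g : G, orderOf g ≠ p) : Function.Surjective fun g : G => g ^ p := by
  have := Fact.mk hp
  have hdvd : ¬ p ∣ Nat.card G := fun hdvd => (exists_prime_orderOf_dvd_card' p hdvd).elim h
  exact (powCoprime (hp.coprime_iff_not_dvd.mpr hdvd).symm).surjective

section Field

variable {K : Type*} [Field K]

lemma isTotallyComplex_of_sq_eq {x : K} {d : ℤ} (hd : d < 0) (hx : x ^ 2 = d) :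
    IsTotallyComplex K where
  isComplex v := by
    rw [← InfinitePlace.not_isReal_iff_isComplex]
    intro hv
    have hsq := congrArg (InfinitePlace.embedding_of_isReal hv) hx
    rw [map_pow, map_intCast] at hsq
    have hd' : (d : ℝ) < 0 := by exact_mod_cast hd
    linarith [sq_nonneg (InfinitePlace.embedding_of_isReal hv x)]

lemma exists_ringOfIntegers_sq_eq_sub [CharZero K] {s : K} {c : ℤ}
    (hs : s ^ 2 = (1 - 4 * c : ℤ)) :
    ∃ α : 𝓞 K, α ^ 2 = α - c := by
  push_cast at hs
  have hroot : ((1 + s) / 2) ^ 2 = (1 + s) / 2 - c := by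
    linear_combination hs / 4
  have hint : IsIntegral ℤ ((1 + s) / 2) := by
    refine ⟨X ^ 2 - X + C c, by monicity!, ?_⟩
    rw [← aeval_def]
    simp [hroot]
  obtain ⟨α, hα⟩ := (IsIntegralClosure.isIntegral_iff (A := 𝓞 K)).mp hint
  refine ⟨α, FaithfulSMul.algebraMap_injective (𝓞 K) K ?_⟩
  rw [map_pow, map_sub, map_intCast, hα, hroot]

end Field

section NumberField

variable {K : Type*} [Field K] [NumberField K]

lemma prime_orderOf_unit_le {u : (𝓞 K)ˣ} (hp : (orderOf u).Prime) :
    orderOf u ≤ Module.finrank ℚ K + 1 := by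
  have hζ : IsPrimitiveRoot (u : K) (orderOf u) :=
    IsPrimitiveRoot.coe_coe_iff.mpr (IsPrimitiveRoot.orderOf u)
  have htotient := hζ.lcm_totient_le_finrank hζ <| by
    rw [Nat.lcm_self]
    exact cyclotomic.irreducible_rat hp.pos
  rw [Nat.lcm_self, Nat.totient_prime hp] at htotient
  omega

variable [IsQuadraticExtension ℚ K]

instance isQuadraticExtension_int_ringOfIntegers : IsQuadraticExtension ℤ (𝓞 K) where
  finrank_eq_two' := (RingOfIntegers.rank K).trans (IsQuadraticExtension.finrank_eq_two ℚ K)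

lemma finite_units_of_isTotallyComplex [IsTotallyComplex K] : Finite (𝓞 K)ˣ := by
  have hrank : Units.rank K = 0 := by
    have hplaces := IsTotallyComplex.finrank (K := K)
    rw [IsQuadraticExtension.finrank_eq_two] at hplaces
    rw [Units.rank, InfinitePlace.card_eq_nrRealPlaces_add_nrComplexPlaces,
      IsTotallyComplex.nrRealPlaces_eq_zero]
    omega
  have : IsEmpty (Fin (Units.rank K)) := by rw [hrank]; infer_instance
  refine Finite.of_surjective ((↑) : Units.torsion K → (𝓞 K)ˣ) fun u => ?_
  obtain ⟨⟨ζ, e⟩, hu, -⟩ := Units.exist_unique_eq_mul_prod K u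
  exact ⟨ζ, by simpa using hu.symm⟩

lemma orderOf_unit_ne_of_sq_eq_sub_pow {α : 𝓞 K} {V : ℤ} {p : ℕ} (hV : 2 ≤ V) (hp : p.Prime)
    (hodd : Odd p) (hα : α ^ 2 = α - (V ^ p : ℤ)) (u : (𝓞 K)ˣ) : orderOf u ≠ p := by
  rintro rfl
  have hle := prime_orderOf_unit_le hp
  rw [IsQuadraticExtension.finrank_eq_two] at hle
  have hthree : orderOf u = 3 := by
    obtain ⟨t, ht⟩ := hodd
    have := hp.two_le
    omega
  rw [hthree] at hα
  have hω : (u : 𝓞 K) ^ 2 + u + 1 = 0 := by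
    have hprim : IsPrimitiveRoot (u : 𝓞 K) 3 :=
      IsPrimitiveRoot.coe_units_iff.mpr (hthree ▸ IsPrimitiveRoot.orderOf u)
    have hsum := hprim.geom_sum_eq_zero (by norm_num)
    simp only [Finset.sum_range_succ, Finset.sum_range_zero] at hsum
    linear_combination hsum
  have := eq_one_of_sq_eq_sub_pow_three (by omega) hα hω
  omega

lemma not_associated_pow_of_sq_eq_sub_pow {α : 𝓞 K} {V : ℤ} {p : ℕ} (hV : 2 ≤ V) (hp : p.Prime)
    (hodd : Odd p) (hα : α ^ 2 = α - (V ^ p : ℤ)) (β : 𝓞 K) : ¬ Associated (β ^ p) α := by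
  rintro ⟨u, hu⟩
  have : IsTotallyComplex K := by
    have hpos : 0 < V ^ p := by positivity
    refine isTotallyComplex_of_sq_eq (x := (2 * α - 1 : K)) (d := 1 - 4 * V ^ p) (by omega) ?_
    have hα' := congrArg (algebraMap (𝓞 K) K) hα
    simp only [map_pow, map_sub, map_intCast] at hα'
    push_cast at hα' ⊢
    linear_combination 4 * hα'
  have := finite_units_of_isTotallyComplex (K := K)
  obtain ⟨v, rfl⟩ := pow_surjective_of_forall_orderOf_ne hp
    (orderOf_unit_ne_of_sq_eq_sub_pow hV hp hodd hα) u
  refine pow_ne_of_sq_eq_sub_pow hV hp hodd hα (β * v) ?_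
  rw [mul_pow, ← hu, Units.val_pow_eq_pow_val]

theorem exists_classGroup_orderOf_eq_of_sq_eq_sub_pow {α : 𝓞 K} {U : ℤ} {n : ℕ} (hU : 2 ≤ U)
    (hn : Odd n) (hα : α ^ 2 = α - (U ^ n : ℤ)) : ∃ x : ClassGroup (𝓞 K), orderOf x = n := by
  have hcop : IsCoprime α (1 - α) := ⟨1, 1, by ring⟩
  have hmul : α * (1 - α) = (U : 𝓞 K) ^ n := by
    push_cast at hα
    linear_combination -hα
  have hα₀ : α ≠ 0 := by
    rintro rfl
    have hU₀ : (U : 𝓞 K) ≠ 0 := by exact_mod_cast (by omega : U ≠ 0)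
    exact pow_ne_zero n hU₀ (by rw [← hmul, zero_mul])
  obtain ⟨I, hI⟩ := exists_span_singleton_eq_pow hcop hmul
  refine exists_classGroup_orderOf_eq hα₀ hn.pos.ne' hI fun p hp ⟨m, hm⟩ => ?_
  subst hm
  have hm₀ : m ≠ 0 := (Nat.odd_mul.mp hn).2.pos.ne'
  refine not_associated_pow_of_sq_eq_sub_pow (V := U ^ m) ?_ hp (Nat.odd_mul.mp hn).1 ?_
  · exact hU.trans (le_self_pow₀ (by omega) hm₀)
  · rwa [← pow_mul, mul_comm]

end NumberField

namespace Qsqrt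

lemma exists_sq_eq (d : ℤ) : ∃ s : Qsqrt d, s ^ 2 = d :=
  ⟨⟨_, IntermediateField.mem_adjoin_simple_self ℚ _⟩, Subtype.ext (by simp)⟩

lemma isQuadraticExtension {d : ℤ} (hd : ¬ IsSquare d) : IsQuadraticExtension ℚ (Qsqrt d) where
  finrank_eq_two' := by
    have hirr : Irreducible (X ^ 2 - C (d : ℚ)) :=
      (X_pow_sub_C_irreducible_iff_of_prime Nat.prime_two).mpr fun b hb =>
        hd (Rat.isSquare_intCast_iff.mp ⟨b, by rw [← hb, sq]⟩)
    have hroot : aeval ((d : ℂ) ^ ((1 : ℂ) / 2)) (X ^ 2 - C (d : ℚ)) = 0 := by simp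
    have hmonic : (X ^ 2 - C (d : ℚ)).Monic := monic_X_pow_sub_C _ two_ne_zero
    rw [Qsqrt, IntermediateField.adjoin.finrank ⟨_, hmonic, hroot⟩,
      ← minpoly.eq_of_irreducible_of_monic hirr hroot hmonic, natDegree_X_pow_sub_C]

lemma numberField {d : ℤ} (hd : ¬ IsSquare d) : NumberField (Qsqrt d) where
  to_finiteDimensional := have := isQuadraticExtension hd; inferInstance

end Qsqrt

/-- If `n ≥ 3` is an odd integer, then for any integer `U ≥ 2` the ideal class group of
the imaginary quadratic field `ℚ(√(1 − 4Uⁿ))` contains an element of order `n`; in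
particular `n` divides the class number of `ℚ(√(1 − 4Uⁿ))`. -/
theorem classGroup_exists_orderOf_eq_of_one_sub_four_pow
    (n : ℕ) (hn : 3 ≤ n) (hnodd : Odd n) (U : ℤ) (hU : 2 ≤ U) :
    (∃ x : ClassGroup (NumberField.RingOfIntegers (Qsqrt (1 - 4 * U ^ n))),
        orderOf x = n) ∧
      n ∣ classNumSqrt (1 - 4 * U ^ n) := by
  have hD : ¬ IsSquare (1 - 4 * U ^ n) := fun hsq => by
    have : 0 < U ^ n := by positivity
    linarith [hsq.nonneg]
  have := Qsqrt.isQuadraticExtension hD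
  have := Qsqrt.numberField hD
  obtain ⟨s, hs⟩ := Qsqrt.exists_sq_eq (1 - 4 * U ^ n)
  obtain ⟨α, hα⟩ := exists_ringOfIntegers_sq_eq_sub hs
  obtain ⟨x, hx⟩ := exists_classGroup_orderOf_eq_of_sq_eq_sub_pow hU hnodd hα
  exact ⟨⟨x, hx⟩, (dvd_of_eq hx.symm).trans (orderOf_dvd_natCard x)⟩
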